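/- arXiv:2406.09048 — 2 statements merged into one kernel-verified Lean document; each statement's English description precedes it below -/
import Mathlib

section
/- Let d ≥ 1, let γ be the standard Gaussian measure on ℝ^d (the product over coordinates of the one-dimensional standard Gaussian), let g(ρ) = log(1 + e^ρ), and let s : ℝ^d → ℝ be infinitely differentiable with s and all its iterated derivatives bounded. Define H : ℝ^d × ℝ → ℝ by H(m, ρ) = ∫_{ℝ^d} s(m + g(ρ)·z) dγ(z). Then H is infinitely differentiable on ℝ^{d+1}, and for every integer n ≥ 0 there exists a constant C_n > 0 such that the n-th iterated derivative of H satisfies ‖H^{(n)}(m, ρ)‖ ≤ C_n for all (m, ρ) ∈ ℝ^{d+1}. -/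
/-!
The map `H` is a parametric integral of `F(p, z) = s (m + g(ρ) z)`, `p = (m, ρ)`, and the point is to
dominate every `p`-derivative of `F` by a `γ`-integrable function of `z` alone.

The softplus `g` is unbounded, but `g' = σ` is the sigmoid and `σ' = σ (1 - σ)`, so every derivative
of `g` of positive order is a polynomial in `σ ∈ [0, 1]`, hence bounded
(`exists_uniform_bound_softplus`). As `s` and its derivatives are bounded wherever they are evaluated,
the Faà di Bruno estimate for compositions only involves derivatives of `(m, ρ) ↦ m + g(ρ) z` of
positive order, and gives `‖D_p^n F(p, z)‖ ≤ M_n (1 + ‖z‖)^n` (`exists_bound_integrand`). Gaussian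
moments are finite (`integrable_one_add_norm_pow`), so repeated differentiation under the integral
sign (`contDiff_integral_and_bound`) yields smoothness together with the bounds
`‖H^{(n)}‖ ≤ ∫ M_n (1 + ‖z‖)^n dγ(z)`.
-/

open MeasureTheory ProbabilityTheory

/-- The softplus function `g(ρ) = log(1 + e^ρ)`. -/
noncomputable def softplus (ρ : ℝ) : ℝ := Real.log (1 + Real.exp ρ)

/-- The standard Gaussian measure `N(0, I_d)` on `ℝ^d`, product of the one-dimensional
standard Gaussians over the coordinates. -/
noncomputable def stdGaussianPi (d : ℕ) : Measure (Fin d → ℝ) :=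
  Measure.pi fun _ => gaussianReal 0 1

theorem contDiff_softplus : ContDiff ℝ (⊤ : ℕ∞) softplus := by
  unfold softplus
  exact (contDiff_const.add Real.contDiff_exp).log fun x => by positivity

theorem deriv_softplus : deriv softplus = Real.sigmoid := by
  funext x
  have h : HasDerivAt softplus (Real.exp x / (1 + Real.exp x)) x :=
    ((Real.hasDerivAt_exp x).const_add 1).log (by positivity)
  rw [h.deriv, Real.sigmoid_def, Real.exp_neg]
  field_simp
  ring

/-- The logistic equation `σ' = σ (1 - σ)` keeps the polynomials in the sigmoid `σ` stable under
differentiation. -/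
theorem exists_iteratedDeriv_sigmoid_eq (n : ℕ) (P : Polynomial ℝ) :
    ∃ Q : Polynomial ℝ, iteratedDeriv n (fun x => P.eval (Real.sigmoid x)) =
      fun x => Q.eval (Real.sigmoid x) := by
  induction n generalizing P with
  | zero => exact ⟨P, iteratedDeriv_zero⟩
  | succ n ih =>
    obtain ⟨Q, hQ⟩ := ih (P.derivative * (Polynomial.X * (1 - Polynomial.X)))
    refine ⟨Q, ?_⟩
    rw [iteratedDeriv_succ', ← hQ]
    congr 1
    funext x
    have := (P.hasDerivAt (Real.sigmoid x)).comp x (Real.hasDerivAt_sigmoid x)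
    simpa [Function.comp_def] using this.deriv

theorem exists_bound_iteratedFDeriv_softplus (n : ℕ) :
    ∃ C : ℝ, ∀ x, ‖iteratedFDeriv ℝ (n + 1) softplus x‖ ≤ C := by
  obtain ⟨Q, hQ⟩ := exists_iteratedDeriv_sigmoid_eq n Polynomial.X
  obtain ⟨C, hC⟩ := isCompact_Icc (a := (0 : ℝ)) (b := 1) |>.exists_bound_of_continuousOn
    Q.continuous.continuousOn
  refine ⟨C, fun x => ?_⟩
  simp only [Polynomial.eval_X] at hQ
  rw [norm_iteratedFDeriv_eq_norm_iteratedDeriv, iteratedDeriv_succ', deriv_softplus,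
    show Real.sigmoid = fun x => Real.sigmoid x from rfl, hQ]
  exact hC _ ⟨Real.sigmoid_nonneg x, Real.sigmoid_le_one x⟩

/-- Although the softplus itself is unbounded, one constant bounds its derivatives of orders
`1, …, n`. -/
theorem exists_uniform_bound_softplus (n : ℕ) :
    ∃ K : ℝ, 1 ≤ K ∧ ∀ i, 1 ≤ i → i ≤ n → ∀ x, ‖iteratedFDeriv ℝ i softplus x‖ ≤ K := by
  induction n with
  | zero => exact ⟨1, le_rfl, fun i h1 h2 => by omega⟩
  | succ n ih =>
    obtain ⟨K, hK1, hK⟩ := ih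
    obtain ⟨C, hC⟩ := exists_bound_iteratedFDeriv_softplus n
    refine ⟨max K C, hK1.trans (le_max_left _ _), fun i h1 h2 x => ?_⟩
    rcases Nat.lt_or_ge n i with h | h
    · obtain rfl : i = n + 1 := by omega
      exact (hC x).trans (le_max_right _ _)
    · exact (hK i h1 h x).trans (le_max_left _ _)

theorem norm_iteratedFDeriv_clm_le {E F : Type*} [NormedAddCommGroup E] [NormedSpace ℝ E]
    [NormedAddCommGroup F] [NormedSpace ℝ F] (L : E →L[ℝ] F) {i : ℕ} (hi : 1 ≤ i) (x : E) :
    ‖iteratedFDeriv ℝ i L x‖ ≤ ‖L‖ := by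
  obtain ⟨k, rfl⟩ := Nat.exists_eq_add_of_le' hi
  rw [← norm_iteratedFDeriv_fderiv, show fderiv ℝ L = fun _ => L from funext fun x => L.fderiv]
  rcases k with _ | k
  · simp
  · rw [iteratedFDeriv_const_of_ne (Nat.succ_ne_zero k)]
    simp

theorem contDiff_reparam {d : ℕ} :
    ContDiff ℝ (⊤ : ℕ∞) fun q : ((Fin d → ℝ) × ℝ) × (Fin d → ℝ) =>
      q.1.1 + softplus q.1.2 • q.2 :=
  contDiff_fst.fst.add ((contDiff_softplus.comp contDiff_fst.snd).smul contDiff_snd)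

/-- The `i`-th derivative (`1 ≤ i`) in `(m, ρ)` of `m + g(ρ) z` is at most `1 + K ‖z‖`; it is stated
with an `i`-th power, the form that the Faà di Bruno estimate for compositions requires. -/
theorem norm_iteratedFDeriv_reparam_le {d : ℕ} (z : Fin d → ℝ) {K : ℝ} (hK1 : 1 ≤ K) {i : ℕ}
    (hi : 1 ≤ i) (hK : ∀ x, ‖iteratedFDeriv ℝ i softplus x‖ ≤ K) (p : (Fin d → ℝ) × ℝ) :
    ‖iteratedFDeriv ℝ i (fun p : (Fin d → ℝ) × ℝ => p.1 + softplus p.2 • z) p‖ ≤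
      (K * (1 + ‖z‖)) ^ i := by
  let A := ContinuousLinearMap.fst ℝ (Fin d → ℝ) ℝ
  let B := ContinuousLinearMap.snd ℝ (Fin d → ℝ) ℝ
  let L := ContinuousLinearMap.toSpanSingleton ℝ z
  have hB : ContDiff ℝ (⊤ : ℕ∞) (softplus ∘ B) := contDiff_softplus.comp B.contDiff
  have hLB : ContDiff ℝ (⊤ : ℕ∞) (L ∘ (softplus ∘ B)) := L.contDiff.comp hB
  have hii : (i : WithTop ℕ∞) ≤ (⊤ : ℕ∞) := by exact_mod_cast le_top
  have hfun : (fun p : (Fin d → ℝ) × ℝ => p.1 + softplus p.2 • z) =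
      (A : (Fin d → ℝ) × ℝ → (Fin d → ℝ)) + L ∘ (softplus ∘ B) := by
    funext p; simp [A, B, L]
  have h1 : ‖iteratedFDeriv ℝ i (A : (Fin d → ℝ) × ℝ → (Fin d → ℝ)) p‖ ≤ 1 :=
    (norm_iteratedFDeriv_clm_le A hi p).trans (ContinuousLinearMap.norm_fst_le ..)
  have h2 : ‖iteratedFDeriv ℝ i (softplus ∘ B) p‖ ≤ K := by
    rw [B.iteratedFDeriv_comp_right contDiff_softplus p hii]
    refine (ContinuousMultilinearMap.norm_compContinuousLinearMap_le _ _).trans ?_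
    have hB1 : ‖B‖ ≤ 1 := ContinuousLinearMap.norm_snd_le ..
    have : ∏ _j : Fin i, ‖B‖ ≤ 1 := Finset.prod_le_one (fun _ _ => norm_nonneg _) fun _ _ => hB1
    calc _ ≤ K * 1 := mul_le_mul (hK _) this (by positivity) (by linarith)
      _ = K := mul_one K
  have h3 : ‖iteratedFDeriv ℝ i (L ∘ (softplus ∘ B)) p‖ ≤ ‖z‖ * K := by
    refine (L.norm_iteratedFDeriv_comp_left hB.contDiffAt hii).trans ?_
    rw [show ‖L‖ = ‖z‖ from ContinuousLinearMap.norm_toSpanSingleton ..]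
    gcongr
  rw [hfun, iteratedFDeriv_add (A.contDiff.of_le le_top) (hLB.of_le hii)]
  calc _ ≤ 1 + ‖z‖ * K := (norm_add_le _ _).trans (add_le_add h1 h3)
    _ ≤ K * (1 + ‖z‖) := by linarith
    _ ≤ (K * (1 + ‖z‖)) ^ i := by
      refine le_self_pow₀ ?_ (by omega)
      nlinarith [norm_nonneg z]

theorem memLp_id_stdGaussianPi (d n : ℕ) : MemLp (fun z : Fin d → ℝ => z) n (stdGaussianPi d) := by
  refine memLp_pi_iff.2 fun i => ?_
  have h1 : MemLp (id : ℝ → ℝ) n (gaussianReal 0 1) :=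
    memLp_id_gaussianReal' (n : ENNReal) (ENNReal.natCast_ne_top n)
  have h2 : MeasurePreserving (Function.eval i) (stdGaussianPi d) (gaussianReal 0 1) :=
    measurePreserving_eval (fun _ : Fin d => gaussianReal 0 1) i
  exact h1.comp_measurePreserving h2

instance isProbabilityMeasure_stdGaussianPi (d : ℕ) : IsProbabilityMeasure (stdGaussianPi d) := by
  unfold stdGaussianPi
  infer_instance

theorem integrable_one_add_norm_pow (d n : ℕ) :
    Integrable (fun z : Fin d → ℝ => (1 + ‖z‖) ^ n) (stdGaussianPi d) := by
  have h1 : MemLp (fun _ : Fin d → ℝ => (1 : ℝ)) n (stdGaussianPi d) := memLp_const 1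
  have h2 : MemLp (fun z : Fin d → ℝ => ‖z‖) n (stdGaussianPi d) :=
    (memLp_id_stdGaussianPi d n).norm
  have h : MemLp (fun z : Fin d → ℝ => 1 + ‖z‖) n (stdGaussianPi d) := h1.add h2
  refine h.integrable_norm_pow'.congr (.of_forall fun z => ?_)
  have hz : 0 ≤ 1 + ‖z‖ := by positivity
  simp only [Real.norm_of_nonneg hz]

section ParametricIntegral

variable {E Z : Type} [NormedAddCommGroup E] [NormedSpace ℝ E] [NormedAddCommGroup Z]
  [NormedSpace ℝ Z] [MeasurableSpace Z] [BorelSpace Z] [SecondCountableTopology Z]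
  {μ : Measure Z}

/-- Differentiation under the integral sign, for a jointly smooth integrand whose partial
derivatives are dominated, uniformly in the parameter, by integrable functions. -/
theorem hasFDerivAt_integral_of_smooth {G : Type} [NormedAddCommGroup G] [NormedSpace ℝ G]
    {F : E → Z → G} (hF : ContDiff ℝ (⊤ : ℕ∞) (Function.uncurry F)) {B₀ B₁ : Z → ℝ}
    (hB₀ : Integrable B₀ μ) (hB₁ : Integrable B₁ μ) (h₀ : ∀ z p, ‖F p z‖ ≤ B₀ z)
    (h₁ : ∀ z p, ‖fderiv ℝ (F · z) p‖ ≤ B₁ z) (p : E) :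
    HasFDerivAt (fun p => ∫ z, F p z ∂μ) (∫ z, fderiv ℝ (F · z) p ∂μ) p := by
  have hz : ∀ z, ContDiff ℝ (⊤ : ℕ∞) (F · z) := fun z =>
    hF.comp (contDiff_id.prodMk contDiff_const)
  have hm : ∀ p, AEStronglyMeasurable (F p) μ := fun p =>
    (hF.continuous.comp (Continuous.prodMk_right p)).aestronglyMeasurable
  have hswap : ContDiff ℝ (⊤ : ℕ∞) (Function.uncurry fun z p => F p z) :=
    hF.comp (contDiff_snd.prodMk contDiff_fst)
  have hm' : AEStronglyMeasurable (fun z => fderiv ℝ (F · z) p) μ :=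
    (ContDiff.fderiv (n := 0) hswap contDiff_const
      (by norm_cast)).continuous.aestronglyMeasurable
  exact hasFDerivAt_integral_of_dominated_of_fderiv_le Filter.univ_mem
    (.of_forall hm) (hB₀.mono' (hm p) (.of_forall fun z => h₀ z p)) hm'
    (.of_forall fun z p _ => h₁ z p) hB₁
    (.of_forall fun z p _ => ((hz z).differentiable (by simp) p).hasFDerivAt)

/-- The smoothness and the bound are proved together, for all target spaces at once, because the
derivative of a `G`-valued parametric integral is an integral with values in `E →L[ℝ] G`. -/
theorem contDiff_integral_and_bound (n : ℕ) {G : Type} [NormedAddCommGroup G] [NormedSpace ℝ G]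
    {F : E → Z → G} (hF : ContDiff ℝ (⊤ : ℕ∞) (Function.uncurry F)) {B : ℕ → Z → ℝ}
    (hB : ∀ n, Integrable (B n) μ)
    (h : ∀ n z p, ‖iteratedFDeriv ℝ n (F · z) p‖ ≤ B n z) :
    ContDiff ℝ n (fun p => ∫ z, F p z ∂μ) ∧
      ∀ p, ‖iteratedFDeriv ℝ n (fun p => ∫ z, F p z ∂μ) p‖ ≤ ∫ z, B n z ∂μ := by
  induction n generalizing G B with
  | zero =>
    have hd := hasFDerivAt_integral_of_smooth hF (hB 0) (hB 1)
      (fun z p => by simpa using h 0 z p) (fun z p => by simpa using h 1 z p)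
    refine ⟨?_, fun p => ?_⟩
    · exact contDiff_zero.2 (continuous_iff_continuousAt.2 fun p => (hd p).continuousAt)
    · rw [norm_iteratedFDeriv_zero]
      exact norm_integral_le_of_norm_le (hB 0) (.of_forall fun z => by simpa using h 0 z p)
  | succ n ih =>
    have hd := hasFDerivAt_integral_of_smooth hF (hB 0) (hB 1)
      (fun z p => by simpa using h 0 z p) (fun z p => by simpa using h 1 z p)
    have hfd : fderiv ℝ (fun p => ∫ z, F p z ∂μ) = fun p => ∫ z, fderiv ℝ (F · z) p ∂μ :=
      funext fun p => (hd p).fderiv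
    have hF' : ContDiff ℝ (⊤ : ℕ∞) (Function.uncurry fun p z => fderiv ℝ (F · z) p) := by
      refine ContDiff.fderiv (m := (⊤ : ℕ∞)) (f := fun (q : E × Z) p => F p q.2) ?_ contDiff_fst
        (by simp)
      exact hF.comp (contDiff_snd.prodMk contDiff_fst.snd)
    obtain ⟨ih₁, ih₂⟩ := ih hF' (B := fun k => B (k + 1)) (fun k => hB (k + 1))
      (fun k z p => by
        have := h (k + 1) z p
        rwa [← norm_iteratedFDeriv_fderiv] at this)
    refine ⟨?_, fun p => ?_⟩
    · push_cast
      refine contDiff_succ_iff_fderiv.2 ⟨fun p => (hd p).differentiableAt, by simp, ?_⟩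
      rw [hfd]
      exact ih₁
    · rw [← norm_iteratedFDeriv_fderiv, hfd]
      exact ih₂ p

end ParametricIntegral

/-- All partial derivatives of the integrand in `(m, ρ)` grow at most polynomially in `z`,
uniformly in `(m, ρ)`. -/
theorem exists_bound_integrand {d : ℕ} {s : (Fin d → ℝ) → ℝ} (hs : ContDiff ℝ (⊤ : ℕ∞) s)
    (hsb : ∀ n : ℕ, ∃ C > 0, ∀ w : Fin d → ℝ, ‖iteratedFDeriv ℝ n s w‖ ≤ C) (n : ℕ) :
    ∃ M : ℝ, ∀ (z : Fin d → ℝ) (p : (Fin d → ℝ) × ℝ),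
      ‖iteratedFDeriv ℝ n (fun p : (Fin d → ℝ) × ℝ => s (p.1 + softplus p.2 • z)) p‖ ≤
        M * (1 + ‖z‖) ^ n := by
  choose C hC0 hC using hsb
  obtain ⟨K, hK1, hK⟩ := exists_uniform_bound_softplus n
  refine ⟨n.factorial * (∑ j ∈ Finset.range (n + 1), C j) * K ^ n, fun z p => ?_⟩
  have hf : ContDiff ℝ (⊤ : ℕ∞) fun p : (Fin d → ℝ) × ℝ => p.1 + softplus p.2 • z :=
    contDiff_reparam.comp (contDiff_id.prodMk contDiff_const)
  have := norm_iteratedFDeriv_comp_le hs hf (n := n) (by exact_mod_cast le_top) p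
    (C := ∑ j ∈ Finset.range (n + 1), C j) (D := K * (1 + ‖z‖))
    (fun i hi => (hC i _).trans <| Finset.single_le_sum (f := C) (fun j _ => (hC0 j).le)
      (Finset.mem_range.2 (by omega)))
    (fun i h1 h2 => norm_iteratedFDeriv_reparam_le z hK1 h1 (hK i h1 h2) p)
  rwa [mul_pow, ← mul_assoc] at this

/-- If `s : ℝ^d → ℝ` is `C^∞` with all iterated derivatives bounded, then the
variational expectation `H(m, ρ) = ∫ s(m + g(ρ)·z) dγ(z)` under the standard Gaussian
`γ` is `C^∞` on `ℝ^{d+1}` and all its iterated derivatives are bounded. -/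
theorem variational_expectation_smooth (d : ℕ) (hd : 1 ≤ d) (s : (Fin d → ℝ) → ℝ)
    (hs : ContDiff ℝ (⊤ : ℕ∞) s)
    (hsb : ∀ n : ℕ, ∃ C > 0, ∀ w : Fin d → ℝ, ‖iteratedFDeriv ℝ n s w‖ ≤ C)
    (H : (Fin d → ℝ) × ℝ → ℝ)
    (hH : ∀ (m : Fin d → ℝ) (ρ : ℝ),
      H (m, ρ) = ∫ z, s (m + softplus ρ • z) ∂(stdGaussianPi d)) :
    ContDiff ℝ (⊤ : ℕ∞) H ∧
      ∀ n : ℕ, ∃ C > 0, ∀ p : (Fin d → ℝ) × ℝ, ‖iteratedFDeriv ℝ n H p‖ ≤ C := by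
  obtain rfl : H = fun p => ∫ z, s (p.1 + softplus p.2 • z) ∂(stdGaussianPi d) :=
    funext fun p => hH p.1 p.2
  choose M hM using exists_bound_integrand hs hsb
  have key := fun n => contDiff_integral_and_bound (μ := stdGaussianPi d) n
    (F := fun (p : (Fin d → ℝ) × ℝ) z => s (p.1 + softplus p.2 • z))
    (hs.comp contDiff_reparam) (B := fun n z => M n * (1 + ‖z‖) ^ n)
    (fun n => (integrable_one_add_norm_pow d n).const_mul _) hM
  refine ⟨contDiff_infty.2 fun n => (key n).1, fun n => ?_⟩
  refine ⟨max (∫ z, M n * (1 + ‖z‖) ^ n ∂(stdGaussianPi d)) 1, by positivity, fun p => ?_⟩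
  exact ((key n).2 p).trans (le_max_left _ _)
end

section
/- Let d, N ≥ 1, let X ⊂ ℝ^n be compact, let B, M, κ > 0, let s : ℝ^d × X → ℝ satisfy |s(w, x)| ≤ B and ‖∇_w s(w, x)‖ ≤ B for all (w, x), let g(ρ) = log(1 + e^ρ), and let φ((m, ρ), z, x) = s(m + g(ρ)z, x). Let m₀ ∈ ℝ^d, σ₀ > 0, and let D(m, ρ) = ‖m − m₀‖²/(2σ₀²) + (d/2)(g(ρ)²/σ₀² − 1) + (d/2)·log(σ₀²/g(ρ)²). Then there exists a constant C > 0, depending only on B, M, d, σ₀ and ‖m₀‖, such that for all θ¹, …, θ^N ∈ ℝ^{d+1}, all z¹, …, z^N ∈ ℝ^d, all x ∈ X, all y ∈ ℝ with |y| ≤ M, and all i ∈ {1, …, N}, the Bayes-by-Backprop increment Δ^i = (κ/N²)·Σ_{j=1}^N ( φ(θ^j, z^j, x) − y )·∇_θ φ(θ^i, z^i, x) + (κ/N)·∇D(θ^i) satisfies ‖Δ^i‖ ≤ (κ/N)·C·(1 + ‖z^i‖ + ‖θ^i‖). -/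
/-!
The increment splits into a data term and a prior term. With `g` the softplus and
`q = g' = e^ρ / (1 + e^ρ)`, three scalar facts suffice: `0 ≤ q ≤ 1`, `0 < g(ρ) ≤ 1 + |ρ|`, and
`q ≤ g`, the last one being `1 - 1/u ≤ log u` at `u = 1 + e^ρ`.

* By the chain rule `∇φ = ∇s ∘ (dm + q dρ z)`, so `‖∇φ‖ ≤ B (1 + ‖z‖)` (`norm_fderiv_phi_le`), and
  each residual `φ - y` is at most `B + M`.
* In `∇D` the logarithmic term contributes `-d q / g`, which is bounded because `q ≤ g`; the quadratic
  terms grow linearly in `m` and `g(ρ)`. Hence `‖∇D‖` grows at most linearly in `θ`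
  (`norm_fderiv_dkl_le`).
-/

open MeasureTheory

/-- The reparametrized network unit `φ((m, ρ), z, x) = s(m + g(ρ)z, x)` with parameter
`θ = (m, ρ)`. -/
noncomputable def phi {d n : ℕ} {X : Set (Fin n → ℝ)} (s : (Fin d → ℝ) → X → ℝ)
    (ϑ : (Fin d → ℝ) × ℝ) (z : Fin d → ℝ) (x : X) : ℝ :=
  s (ϑ.1 + softplus ϑ.2 • z) x

/-- The closed-form KL divergence `D(m, ρ)` of `N(m, g(ρ)² I_d)` from the Gaussian
prior `N(m₀, σ₀² I_d)`. -/
noncomputable def dkl (d : ℕ) (m₀ : Fin d → ℝ) (σ₀ : ℝ) (ϑ : (Fin d → ℝ) × ℝ) : ℝ :=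
  (∑ j, (ϑ.1 j - m₀ j) ^ 2) / (2 * σ₀ ^ 2)
    + (d / 2 : ℝ) * (softplus ϑ.2 ^ 2 / σ₀ ^ 2 - 1)
    + (d / 2 : ℝ) * Real.log (σ₀ ^ 2 / softplus ϑ.2 ^ 2)

lemma softplus_pos (ρ : ℝ) : 0 < softplus ρ :=
  Real.log_pos (by linarith [Real.exp_pos ρ])

lemma softplus_le (ρ : ℝ) : softplus ρ ≤ 1 + |ρ| := by
  have h1 : 1 + Real.exp ρ ≤ Real.exp (1 + |ρ|) := by
    have h2 : Real.exp ρ ≤ Real.exp |ρ| := Real.exp_le_exp.2 (le_abs_self ρ)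
    have h3 : 1 ≤ Real.exp |ρ| := Real.one_le_exp (abs_nonneg ρ)
    have h4 : (1 : ℝ) + 1 ≤ Real.exp 1 := Real.add_one_le_exp 1
    rw [Real.exp_add]
    nlinarith
  exact (Real.log_le_iff_le_exp (by positivity)).2 h1

/-- The logistic sigmoid `e^ρ / (1 + e^ρ)`, the derivative of softplus. -/
noncomputable def logistic (ρ : ℝ) : ℝ := Real.exp ρ / (1 + Real.exp ρ)

lemma logistic_nonneg (ρ : ℝ) : 0 ≤ logistic ρ := by
  unfold logistic; positivity

lemma logistic_le_one (ρ : ℝ) : logistic ρ ≤ 1 := by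
  unfold logistic
  rw [div_le_one (by positivity)]
  linarith

/-- This inequality keeps the logarithmic derivative `g'/g` bounded as `ρ → -∞`, where `g → 0`. -/
lemma logistic_le_softplus (ρ : ℝ) : logistic ρ ≤ softplus ρ := by
  have h := Real.one_sub_inv_le_log_of_pos (show 0 < 1 + Real.exp ρ by positivity)
  have e : logistic ρ = 1 - (1 + Real.exp ρ)⁻¹ := by
    unfold logistic
    have : (1 + Real.exp ρ) ≠ 0 := by positivity
    field_simp
    ring
  rw [e]
  exact h

lemma hasDerivAt_softplus (ρ : ℝ) : HasDerivAt softplus (logistic ρ) ρ :=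
  ((Real.hasDerivAt_exp ρ).const_add 1).log (by positivity)

lemma norm_fderiv_phi_le {d n : ℕ} {X : Set (Fin n → ℝ)} {B : ℝ} (hB : 0 < B)
    (s : (Fin d → ℝ) → X → ℝ) (hs : ∀ x : X, ContDiff ℝ 1 (fun w => s w x))
    (hs' : ∀ (w : Fin d → ℝ) (x : X), ‖fderiv ℝ (fun w' => s w' x) w‖ ≤ B)
    (t : (Fin d → ℝ) × ℝ) (z : Fin d → ℝ) (x : X) :
    ‖fderiv ℝ (fun ϑ => phi s ϑ z x) t‖ ≤ B * (1 + ‖z‖) := by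
  have hg : HasFDerivAt (fun ϑ : (Fin d → ℝ) × ℝ => softplus ϑ.2)
      (logistic t.2 • ContinuousLinearMap.snd ℝ (Fin d → ℝ) ℝ) t :=
    (hasDerivAt_softplus t.2).comp_hasFDerivAt t hasFDerivAt_snd
  have hin := (hasFDerivAt_fst (𝕜 := ℝ) (p := t)).add (hg.smul_const z)
  have hout : HasFDerivAt (fun w => s w x)
      (fderiv ℝ (fun w' => s w' x) (t.1 + softplus t.2 • z)) (t.1 + softplus t.2 • z) :=
    ((hs x).differentiable (by norm_num) _).hasFDerivAt
  have h := HasFDerivAt.comp (g := fun w => s w x) t hout hin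
  change HasFDerivAt (fun ϑ => phi s ϑ z x) _ t at h
  rw [h.fderiv]
  refine (ContinuousLinearMap.opNorm_comp_le _ _).trans ?_
  refine mul_le_mul (hs' _ x) ?_ (norm_nonneg _) hB.le
  refine ContinuousLinearMap.opNorm_le_bound _ (by positivity) fun v => ?_
  have h1 : ‖v.1‖ ≤ ‖v‖ := norm_fst_le v
  have h2 : |v.2| ≤ ‖v‖ := norm_snd_le v
  have e : ‖(logistic t.2 * v.2) • z‖ ≤ ‖v‖ * ‖z‖ := by
    rw [norm_smul, Real.norm_eq_abs, abs_mul, abs_of_nonneg (logistic_nonneg _)]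
    gcongr
    calc logistic t.2 * |v.2| ≤ 1 * |v.2| := by
          gcongr
          exact logistic_le_one _
      _ ≤ ‖v‖ := by linarith
  calc _ = ‖v.1 + (logistic t.2 * v.2) • z‖ := by simp
    _ ≤ ‖v.1‖ + ‖(logistic t.2 * v.2) • z‖ := norm_add_le _ _
    _ ≤ (1 + ‖z‖) * ‖v‖ := by linarith

lemma norm_fderiv_dkl_le (d : ℕ) (m₀ : Fin d → ℝ) (σ₀ : ℝ) (hσ₀ : 0 < σ₀)
    (t : (Fin d → ℝ) × ℝ) :
    ‖fderiv ℝ (dkl d m₀ σ₀) t‖ ≤ (d / σ₀ ^ 2 * (‖m₀‖ + 2) + d) * (1 + ‖t‖) := by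
  have hg : HasFDerivAt (fun ϑ : (Fin d → ℝ) × ℝ => softplus ϑ.2)
      (logistic t.2 • ContinuousLinearMap.snd ℝ (Fin d → ℝ) ℝ) t :=
    (hasDerivAt_softplus t.2).comp_hasFDerivAt t hasFDerivAt_snd
  have hgp := softplus_pos t.2
  have hfun : dkl d m₀ σ₀ = fun ϑ => (∑ j, (ϑ.1 j - m₀ j) ^ 2) * (2 * σ₀ ^ 2)⁻¹
      + (d / 2 : ℝ) * (softplus ϑ.2 ^ 2 * (σ₀ ^ 2)⁻¹ - 1)
      + (d / 2 : ℝ) * (Real.log (σ₀ ^ 2) - 2 * Real.log (softplus ϑ.2)) := by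
    funext ϑ
    have := softplus_pos ϑ.2
    unfold dkl
    rw [Real.log_div (by positivity) (by positivity), Real.log_pow (softplus ϑ.2) 2]
    simp only [div_eq_mul_inv, Nat.cast_ofNat]
  have hc : ∀ j ∈ Finset.univ, HasFDerivAt (fun ϑ : (Fin d → ℝ) × ℝ => (ϑ.1 j - m₀ j) ^ 2)
      ((2 * (t.1 j - m₀ j)) • ((ContinuousLinearMap.proj j).comp
        (ContinuousLinearMap.fst ℝ (Fin d → ℝ) ℝ))) t := by
    intro j _
    have h1 : HasFDerivAt (fun ϑ : (Fin d → ℝ) × ℝ => ϑ.1 j) ((ContinuousLinearMap.proj j).comp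
        (ContinuousLinearMap.fst ℝ (Fin d → ℝ) ℝ)) t :=
      ((ContinuousLinearMap.proj (R := ℝ) (φ := fun _ : Fin d => ℝ) j).comp
        (ContinuousLinearMap.fst ℝ (Fin d → ℝ) ℝ)).hasFDerivAt
    simpa using (h1.sub_const (m₀ j)).pow 2
  have hsum := (HasFDerivAt.fun_sum hc).mul_const (2 * σ₀ ^ 2)⁻¹
  have hsq := (((hg.pow 2).mul_const (σ₀ ^ 2)⁻¹).sub_const 1).const_mul (d / 2 : ℝ)
  have hlog := (((hg.log hgp.ne').const_mul 2).const_sub (Real.log (σ₀ ^ 2))).const_mul (d / 2 : ℝ)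
  have h := (hsum.fun_add hsq).fun_add hlog
  rw [hfun, h.fderiv]
  refine ContinuousLinearMap.opNorm_le_bound _ (by positivity) fun v => ?_
  have hv1 : ‖v.1‖ ≤ ‖v‖ := norm_fst_le v
  have hv2 : |v.2| ≤ ‖v‖ := norm_snd_le v
  have ht1 : ‖t.1‖ ≤ ‖t‖ := norm_fst_le t
  have ht2 : |t.2| ≤ ‖t‖ := norm_snd_le t
  have hq0 := logistic_nonneg t.2
  have hq1 := logistic_le_one t.2
  have hgle := softplus_le t.2
  have bsum : |∑ j, (t.1 j - m₀ j) * v.1 j| ≤ d * ((‖t‖ + ‖m₀‖) * ‖v‖) := by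
    refine (Finset.abs_sum_le_sum_abs _ _).trans ?_
    have : ∀ j ∈ Finset.univ, |(t.1 j - m₀ j) * v.1 j| ≤ (‖t‖ + ‖m₀‖) * ‖v‖ := by
      intro j _
      rw [abs_mul]
      refine mul_le_mul ?_ ((norm_le_pi_norm v.1 j).trans hv1) (abs_nonneg _) (by positivity)
      refine (abs_sub _ _).trans ?_
      exact add_le_add ((norm_le_pi_norm t.1 j).trans ht1) (norm_le_pi_norm m₀ j)
    simpa using Finset.sum_le_sum this
  have bsq : |softplus t.2 * logistic t.2 * v.2| ≤ (1 + ‖t‖) * ‖v‖ := by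
    rw [abs_mul, abs_of_nonneg (mul_nonneg hgp.le hq0)]
    refine mul_le_mul ?_ hv2 (abs_nonneg _) (by positivity)
    nlinarith
  have blog : |(softplus t.2)⁻¹ * logistic t.2 * v.2| ≤ ‖v‖ := by
    rw [abs_mul, abs_of_nonneg (by positivity)]
    have : (softplus t.2)⁻¹ * logistic t.2 ≤ 1 := by
      rw [inv_mul_le_one₀ hgp]
      exact logistic_le_softplus _
    nlinarith [abs_nonneg v.2]
  calc _ = ‖(σ₀ ^ 2)⁻¹ * (∑ j, (t.1 j - m₀ j) * v.1 j)
          + (d * (σ₀ ^ 2)⁻¹) * (softplus t.2 * logistic t.2 * v.2)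
          - d * ((softplus t.2)⁻¹ * logistic t.2 * v.2)‖ := by
        congr 1
        simp [mul_assoc, ← Finset.mul_sum]
        ring
    _ ≤ (σ₀ ^ 2)⁻¹ * (d * ((‖t‖ + ‖m₀‖) * ‖v‖)) + (d * (σ₀ ^ 2)⁻¹) * ((1 + ‖t‖) * ‖v‖)
          + d * ‖v‖ := by
        refine (norm_sub_le _ _).trans (add_le_add ((norm_add_le _ _).trans (add_le_add ?_ ?_)) ?_)
        all_goals
          rw [norm_mul, Real.norm_of_nonneg (by positivity), Real.norm_eq_abs]
          gcongr
    _ ≤ _ := by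
        have : 0 ≤ d * (σ₀ ^ 2)⁻¹ * ‖v‖ * (1 + ‖m₀‖ * ‖t‖) + d * ‖t‖ * ‖v‖ := by positivity
        rw [div_eq_mul_inv]
        linear_combination this

/-- Bound on the Bayes-by-Backprop single-step increment: there is a constant `C > 0`,
depending only on `B, M, d, σ₀, ‖m₀‖`, such that the increment
`Δ^i = (κ/N²)Σ_j (φ(θ^j, z^j, x) − y)·∇_θφ(θ^i, z^i, x) + (κ/N)·∇D(θ^i)` satisfies
`‖Δ^i‖ ≤ (κ/N)·C·(1 + ‖z^i‖ + ‖θ^i‖)`. -/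
theorem bbb_increment_bound (d n : ℕ) (hd : 1 ≤ d)
    (X : Set (Fin n → ℝ)) (hX : IsCompact X)
    (B M : ℝ) (hB : 0 < B) (hM : 0 < M)
    (m₀ : Fin d → ℝ) (σ₀ : ℝ) (hσ₀ : 0 < σ₀) :
    ∃ C > 0, ∀ (N : ℕ), 1 ≤ N → ∀ κ : ℝ, 0 < κ →
      ∀ s : (Fin d → ℝ) → X → ℝ,
      (∀ x : X, ContDiff ℝ 1 (fun w => s w x)) →
      (∀ (w : Fin d → ℝ) (x : X), |s w x| ≤ B) →
      (∀ (w : Fin d → ℝ) (x : X), ‖fderiv ℝ (fun w' => s w' x) w‖ ≤ B) →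
      ∀ (θ : Fin N → (Fin d → ℝ) × ℝ) (z : Fin N → Fin d → ℝ) (x : X) (y : ℝ),
        |y| ≤ M → ∀ i : Fin N,
        ‖(κ / (N : ℝ) ^ 2) • (∑ j, (phi s (θ j) (z j) x - y) •
              fderiv ℝ (fun ϑ => phi s ϑ (z i) x) (θ i))
            + (κ / (N : ℝ)) • fderiv ℝ (dkl d m₀ σ₀) (θ i)‖ ≤
          (κ / (N : ℝ)) * C * (1 + ‖z i‖ + ‖θ i‖) := by
  have hK : 0 ≤ (d : ℝ) / σ₀ ^ 2 * (‖m₀‖ + 2) + d := by positivity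
  refine ⟨(B + M) * B + (d / σ₀ ^ 2 * (‖m₀‖ + 2) + d), by positivity, ?_⟩
  intro N hN κ hκ s hs hsB hsB' θ z x y hy i
  have hN0 : (0 : ℝ) < N := by exact_mod_cast hN
  have hphi := norm_fderiv_phi_le hB s hs hsB' (θ i) (z i) x
  have hD := norm_fderiv_dkl_le d m₀ σ₀ hσ₀ (θ i)
  set K : ℝ := (d : ℝ) / σ₀ ^ 2 * (‖m₀‖ + 2) + d
  have hsum : ‖∑ j, (phi s (θ j) (z j) x - y) • fderiv ℝ (fun ϑ => phi s ϑ (z i) x) (θ i)‖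
      ≤ N * ((B + M) * (B * (1 + ‖z i‖))) := by
    have : ∀ j ∈ Finset.univ,
        ‖(phi s (θ j) (z j) x - y) • fderiv ℝ (fun ϑ => phi s ϑ (z i) x) (θ i)‖
          ≤ (B + M) * (B * (1 + ‖z i‖)) := by
      intro j _
      rw [norm_smul]
      refine mul_le_mul ?_ hphi (norm_nonneg _) (by positivity)
      exact (abs_sub _ _).trans (add_le_add (hsB _ x) hy)
    simpa using norm_sum_le_of_le _ this
  calc _ ≤ κ / (N : ℝ) ^ 2 * (N * ((B + M) * (B * (1 + ‖z i‖)))) + κ / N * (K * (1 + ‖θ i‖)) := by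
        refine (norm_add_le _ _).trans (add_le_add ?_ ?_)
        all_goals
          rw [norm_smul, Real.norm_of_nonneg (by positivity)]
          gcongr
    _ = κ / N * ((B + M) * B * (1 + ‖z i‖) + K * (1 + ‖θ i‖)) := by
        field_simp
    _ ≤ κ / N * (((B + M) * B + K) * (1 + ‖z i‖ + ‖θ i‖)) := by
        gcongr
        have : 0 ≤ (B + M) * B * ‖θ i‖ + K * ‖z i‖ := by positivity
        linear_combination this
    _ = _ := by ring
end
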